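/- Let X be a cellular multipointed d-space and γ an execution path of X. The globular naturalization nat(γ) of γ is a regular Moore path. -/

import Mathlib

/- STATEMENT 15: Let X be a cellular multipointed d-space and γ an execution path of X.
The globular naturalization nat(γ) of γ (the Moore composition of the longitudinal cell
paths appearing in the cellular decomposition of γ) is a regular Moore path. -/

open Set unitInterval

noncomputable section

variable {α : Type*} {β : Type*} [TopologicalSpace α] [TopologicalSpace β]

/-- Clamp a real number into the unit interval. -/
def toI (t : ℝ) : I := Set.projIcc 0 1 zero_le_one t

/-- Normalized composition of two paths parametrized by [0,1]. -/
def normComp (γ₁ γ₂ : I → α) : I → α :=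
  fun t => if (t : ℝ) ≤ 1 / 2 then γ₁ (toI (2 * (t : ℝ))) else γ₂ (toI (2 * (t : ℝ) - 1))

/-- An element of `M(1,1)`: a non-decreasing (continuous) surjection of [0,1]. -/
def IsReparam (φ : I → I) : Prop := Monotone φ ∧ Function.Surjective φ ∧ Continuous φ

/-- An element of `𝓘(1)`: a non-decreasing continuous map [0,1] → [0,1],
not necessarily surjective. -/
def IsNondecreasing (φ : I → I) : Prop := Monotone φ ∧ Continuous φ

/-- A multipointed d-space: a space, a set of states, and a set of execution paths with
endpoints in the states, closed under non-decreasing surjective reparametrization and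
under normalized composition. -/
structure MultipointedDSpace (α : Type*) [TopologicalSpace α] where
  states : Set α
  exec : Set (I → α)
  exec_cont : ∀ γ ∈ exec, Continuous γ
  exec_src : ∀ γ ∈ exec, γ 0 ∈ states
  exec_tgt : ∀ γ ∈ exec, γ 1 ∈ states
  exec_reparam : ∀ γ ∈ exec, ∀ φ : I → I, IsReparam φ → γ ∘ φ ∈ exec
  exec_norm : ∀ γ₁ ∈ exec, ∀ γ₂ ∈ exec, γ₁ 1 = γ₂ 0 → normComp γ₁ γ₂ ∈ exec

/-- Moore composition of a path of length `ℓ₁` with a second path. -/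
def mooreComp (ℓ₁ : ℝ) (f g : ℝ → α) : ℝ → α := fun t => if t ≤ ℓ₁ then f t else g (t - ℓ₁)

/-- `(n+1)`-fold Moore composition with prescribed lengths. -/
def mooreCompN : (n : ℕ) → (Fin (n + 1) → ℝ) → (Fin (n + 1) → ℝ → α) → ℝ → α
  | 0, _, f => f 0
  | n + 1, ℓ, f =>
      mooreComp (ℓ 0) (f 0) (mooreCompN n (fun i => ℓ i.succ) (fun i => f i.succ))

/-- `d(X)`: the set of all constant paths together with all Moore compositions
`(γ₁∘φ₁∘μ_{ℓ₁}) * ⋯ * (γₙ∘φₙ∘μ_{ℓₙ})` with `Σ ℓᵢ = 1`, where the `γᵢ` are execution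
paths and the `φᵢ` are non-decreasing continuous self-maps of [0,1]
(`μ_ℓ(t) = t/ℓ`). -/
def dPaths (X : MultipointedDSpace α) : Set (I → α) :=
  {Γ | (∃ x, ∀ t, Γ t = x) ∨
    ∃ (n : ℕ) (ℓ : Fin (n + 1) → ℝ) (γ : Fin (n + 1) → I → α) (φ : Fin (n + 1) → I → I),
      (∀ i, 0 < ℓ i) ∧ (∑ i, ℓ i = 1) ∧ (∀ i, γ i ∈ X.exec) ∧
      (∀ i, IsNondecreasing (φ i)) ∧
      ∀ t : I, Γ t = mooreCompN n ℓ (fun i s => γ i (φ i (toI (s / ℓ i)))) (t : ℝ)}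

/-- A globular cell of a multipointed d-space `X`, of dimension `n + 1`: the data of an
attaching map `Glob^top(D^n) → X` (written as `g : D^n × [0,1] → α`, constant on
`D^n × {0}` and on `D^n × {1}`), injective on the open part, whose longitudinal paths
are execution paths of `X`. -/
structure GlobularCell (X : MultipointedDSpace α) where
  n : ℕ
  g : EuclideanSpace ℝ (Fin n) → I → α
  src : α
  tgt : α
  src_mem : src ∈ X.states
  tgt_mem : tgt ∈ X.states
  g_src : ∀ z : EuclideanSpace ℝ (Fin n), ‖z‖ ≤ 1 → g z 0 = src
  g_tgt : ∀ z : EuclideanSpace ℝ (Fin n), ‖z‖ ≤ 1 → g z 1 = tgt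
  g_cont : ContinuousOn (fun p : EuclideanSpace ℝ (Fin n) × I => g p.1 p.2)
    ((Metric.closedBall 0 1) ×ˢ univ)
  exec_mem : ∀ z : EuclideanSpace ℝ (Fin n), ‖z‖ ≤ 1 → (fun t => g z t) ∈ X.exec
  g_inj : ∀ (z z' : EuclideanSpace ℝ (Fin n)) (t t' : I), ‖z‖ < 1 → ‖z'‖ < 1 →
    0 < (t : ℝ) → (t : ℝ) < 1 → 0 < (t' : ℝ) → (t' : ℝ) < 1 →
    g z t = g z' t' → z = z' ∧ t = t'

/-- The (open) globular cell: the image of `|Glob(D^n)| ∖ |Glob(S^{n-1})|`. -/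
def GlobularCell.openCell {X : MultipointedDSpace α} (c : GlobularCell X) : Set α :=
  {x | ∃ (z : EuclideanSpace ℝ (Fin c.n)) (t : I),
    ‖z‖ < 1 ∧ 0 < (t : ℝ) ∧ (t : ℝ) < 1 ∧ c.g z t = x}

/-- A cellular multipointed d-space: a multipointed d-space obtained by (transfinitely)
attaching globular cells to its set of states. The underlying space is Hausdorff, it is
partitioned into the states and the open globular cells, and every execution path
decomposes (uniquely) as its globular naturalization — a Moore composition of
longitudinal cell paths, each of length 1 — precomposed with a non-decreasing
continuous surjection [0,1] → [0,n+1]. -/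
structure CellularMDSpace (α : Type*) [TopologicalSpace α]
    extends MultipointedDSpace α where
  t2 : T2Space α
  ι : Type*
  cell : ι → GlobularCell toMultipointedDSpace
  cell_disjoint : Pairwise fun i j => Disjoint (cell i).openCell (cell j).openCell
  cell_states_disjoint : ∀ i, Disjoint (cell i).openCell states
  cell_cover : states ∪ ⋃ i, (cell i).openCell = univ
  exec_decomp : ∀ γ ∈ exec, ∃ (n : ℕ) (c : Fin (n + 1) → ι)
      (z : ∀ i : Fin (n + 1), EuclideanSpace ℝ (Fin (cell (c i)).n)) (φ : I → ℝ),
      (∀ i, ‖z i‖ < 1) ∧ Monotone φ ∧ Continuous φ ∧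
      φ 0 = 0 ∧ φ 1 = (n + 1 : ℝ) ∧
      ∀ t : I, γ t = mooreCompN n (fun _ => 1)
        (fun i s => (cell (c i)).g (z i) (toI s)) (φ t)

/-- A Moore path `p : [0,L] → α` is regular if it is constant or if every subinterval on
which it is constant is degenerate. -/
def IsRegularPath (L : ℝ) (p : ℝ → α) : Prop :=
  (∀ s ∈ Icc (0 : ℝ) L, ∀ t ∈ Icc (0 : ℝ) L, p s = p t) ∨
    ∀ a b : ℝ, 0 ≤ a → a ≤ b → b ≤ L → (∀ t ∈ Icc a b, p t = p a) → a = b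

open scoped Topology

section NowhereConstant

variable {X Y Z : Type*} [TopologicalSpace X]

/-- A map is nowhere constant on `s` if it is constant on no nonempty open subset of `s`.
For `s = (0, L)` with `0 < L`, it says that a path of length `L` is regular and non-constant;
testing on open sets rather than on closed intervals makes it insensitive to the values at the
junction points of a Moore composition. -/
def NowhereConstantOn (p : X → Y) (s : Set X) : Prop :=
  ∀ ⦃U : Set X⦄, U ⊆ s → IsOpen U → U.Nonempty → (p '' U).Nontrivial

namespace NowhereConstantOn

variable {p q : X → Y} {s t : Set X}

lemma of_injOn [∀ x : X, (𝓝[≠] x).NeBot] (hp : InjOn p s) : NowhereConstantOn p s := by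
  rintro U hUs hU ⟨x, hx⟩
  obtain ⟨y, hyx, hy⟩ : ({x}ᶜ ∩ U).Nonempty :=
    Filter.nonempty_of_mem (inter_mem_nhdsWithin {x}ᶜ (hU.mem_nhds hx))
  exact Set.Nontrivial.image_of_injOn ⟨x, hx, y, hy, Ne.symm hyx⟩ (hp.mono hUs)

lemma mono (hp : NowhereConstantOn p s) (hts : t ⊆ s) : NowhereConstantOn p t :=
  fun _ hUt => hp (hUt.trans hts)

lemma congr (hp : NowhereConstantOn p s) (hpq : EqOn p q s) : NowhereConstantOn q s :=
  fun _ hUs hU hne => (hpq.mono hUs).image_eq ▸ hp hUs hU hne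

lemma comp_isOpenMap [TopologicalSpace Z] {e : Z → X} (hp : NowhereConstantOn p s)
    (he : IsOpenMap e) : NowhereConstantOn (p ∘ e) (e ⁻¹' s) := by
  intro U hUs hU hne
  rw [image_comp]
  exact hp (image_subset_iff.2 hUs) (he U hU) (hne.image e)

lemma union (hs : NowhereConstantOn p s) (hso : IsOpen s) (ht : NowhereConstantOn p t) :
    NowhereConstantOn p (s ∪ t) := by
  intro U hUst hU hne
  rcases (U ∩ s).eq_empty_or_nonempty with hUs | hUs
  · exact ht ((disjoint_iff_inter_eq_empty.2 hUs).subset_right_of_subset_union hUst) hU hne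
  · exact (hs inter_subset_right (hU.inter hso) hUs).mono (image_mono inter_subset_left)

lemma of_sdiff (hp : NowhereConstantOn p (s \ t)) (ht : IsNowhereDense t) :
    NowhereConstantOn p s := by
  intro U hUs hU hne
  have hmeets : (U \ closure t).Nonempty := by
    by_contra hempty
    have hUt : U ⊆ interior (closure t) :=
      interior_maximal (sdiff_eq_empty.1 (not_nonempty_iff_eq_empty.1 hempty)) hU
    exact hne.ne_empty (subset_empty_iff.1 (hUt.trans_eq ht))
  exact (hp (sdiff_subset_sdiff hUs subset_closure) (hU.sdiff isClosed_closure) hmeets).mono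
    (image_mono sdiff_subset)

end NowhereConstantOn

end NowhereConstant

section MoorePaths

variable {Y : Type*}

lemma nowhereConstantOn_mooreComp {ℓ₁ ℓ₂ : ℝ} {f g : ℝ → Y}
    (hf : NowhereConstantOn f (Ioo 0 ℓ₁)) (hg : NowhereConstantOn g (Ioo 0 ℓ₂)) :
    NowhereConstantOn (mooreComp ℓ₁ f g) (Ioo 0 (ℓ₁ + ℓ₂)) := by
  have hleft : NowhereConstantOn (mooreComp ℓ₁ f g) (Ioo 0 ℓ₁) :=
    hf.congr fun _ ht => (if_pos ht.2.le).symm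
  have hright : NowhereConstantOn (mooreComp ℓ₁ f g) (Ioo ℓ₁ (ℓ₁ + ℓ₂)) := by
    refine ((hg.comp_isOpenMap (Homeomorph.subRight ℓ₁).isOpenMap).mono fun t ht => ?_).congr
      fun _ ht => (if_neg ht.1.not_ge).symm
    exact ⟨sub_pos.2 ht.1, sub_lt_iff_lt_add'.2 ht.2⟩
  have hjunction : IsNowhereDense {ℓ₁} :=
    isClosed_singleton.isNowhereDense_iff.2 (interior_singleton ℓ₁)
  refine ((hleft.union isOpen_Ioo hright).mono ?_).of_sdiff hjunction
  rintro t ⟨⟨h0, hL⟩, hne⟩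
  exact (lt_or_gt_of_ne hne).imp (fun h => ⟨h0, h⟩) (fun h => ⟨h, hL⟩)

lemma nowhereConstantOn_mooreCompN {n : ℕ} {ℓ : Fin (n + 1) → ℝ} {f : Fin (n + 1) → ℝ → Y}
    (hf : ∀ i, NowhereConstantOn (f i) (Ioo 0 (ℓ i))) :
    NowhereConstantOn (mooreCompN n ℓ f) (Ioo 0 (∑ i, ℓ i)) := by
  induction n with
  | zero => exact (Fin.sum_univ_one ℓ).symm ▸ hf 0
  | succ n ih =>
    rw [Fin.sum_univ_succ]
    exact nowhereConstantOn_mooreComp (hf 0) (ih fun i => hf i.succ)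

lemma NowhereConstantOn.isRegularPath {L : ℝ} {p : ℝ → Y}
    (hp : NowhereConstantOn p (Ioo 0 L)) : IsRegularPath L p := by
  refine Or.inr fun a b ha hab hb hconst => hab.eq_of_not_lt fun hlt => ?_
  have hsub : (p '' Ioo a b).Subsingleton := by
    rintro _ ⟨s, hs, rfl⟩ _ ⟨t, ht, rfl⟩
    rw [hconst s (Ioo_subset_Icc_self hs), hconst t (Ioo_subset_Icc_self ht)]
  exact (hp (Ioo_subset_Ioo ha hb) isOpen_Ioo (nonempty_Ioo.2 hlt)).not_subsingleton hsub

end MoorePaths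

lemma GlobularCell.injOn_longitudinal {X : MultipointedDSpace α} (c : GlobularCell X)
    {z : EuclideanSpace ℝ (Fin c.n)} (hz : ‖z‖ < 1) :
    InjOn (fun s => c.g z (toI s)) (Ioo 0 1) := by
  intro s hs t ht hst
  have hcoe {r : ℝ} (hr : r ∈ Ioo (0 : ℝ) 1) : toI r = ⟨r, Ioo_subset_Icc_self hr⟩ :=
    projIcc_of_mem zero_le_one _
  simp only [hcoe hs, hcoe ht] at hst
  exact congrArg Subtype.val (c.g_inj z z _ _ hz hz hs.1 hs.2 ht.1 ht.2 hst).2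

theorem naturalization_regular_general {X : MultipointedDSpace α} {n : ℕ}
    (c : Fin (n + 1) → GlobularCell X) (z : ∀ i, EuclideanSpace ℝ (Fin (c i).n))
    (hz : ∀ i, ‖z i‖ < 1) :
    IsRegularPath (n + 1 : ℝ) (mooreCompN n (fun _ => 1) fun i s => (c i).g (z i) (toI s)) := by
  have hcells (i : Fin (n + 1)) :
      NowhereConstantOn (fun s => (c i).g (z i) (toI s)) (Ioo 0 1) :=
    .of_injOn ((c i).injOn_longitudinal (hz i))
  have hlength : ∑ _ : Fin (n + 1), (1 : ℝ) = n + 1 := by simp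
  rw [← hlength]
  exact (nowhereConstantOn_mooreCompN hcells).isRegularPath

/-- The globular naturalization of an execution path of a cellular multipointed
d-space is regular. -/
theorem naturalization_regular (X : CellularMDSpace α) (γ : I → α) (hγ : γ ∈ X.exec)
    (n : ℕ) (c : Fin (n + 1) → X.ι)
    (z : ∀ i : Fin (n + 1), EuclideanSpace ℝ (Fin (X.cell (c i)).n)) (φ : I → ℝ)
    (hz : ∀ i, ‖z i‖ < 1) (hφm : Monotone φ) (hφc : Continuous φ)
    (hφ0 : φ 0 = 0) (hφ1 : φ 1 = (n + 1 : ℝ))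
    (hdec : ∀ t : I, γ t = mooreCompN n (fun _ => 1)
      (fun i s => (X.cell (c i)).g (z i) (toI s)) (φ t)) :
    IsRegularPath ((n + 1 : ℝ))
      (mooreCompN n (fun _ => 1) (fun i s => (X.cell (c i)).g (z i) (toI s))) := by
  exact naturalization_regular_general (fun i => X.cell (c i)) z hz

end
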